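/- Let P and P' be convex polytopes in ℝ³ with non-empty interior such that (P, −P) and (P', −P') are synisothetic. Then for each w ∈ S² there exist σ ∈ {−1, 1} and x ∈ ℝ³ (possibly depending on σ) such that P_w = (σP')_w + x, cone(P, P_w) = cone(σP', (σP')_w), P_{−w} = (σP')_{−w} + x, and cone(P, P_{−w}) = cone(σP', (σP')_{−w}). -/

import Mathlib

open MeasureTheory Pointwise

/-- The exposed face of `P` in direction `w`: `P_w = {x ∈ P : x·w = h_P(w)}`. -/
def exposedFace (P : Set (EuclideanSpace ℝ (Fin 3)))
    (w : EuclideanSpace ℝ (Fin 3)) : Set (EuclideanSpace ℝ (Fin 3)) :=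
  {x ∈ P | ∀ y ∈ P, @inner ℝ _ _ w y ≤ @inner ℝ _ _ w x}

/-- The support cone of `P` at a face `F`:
`cone(P,F) = {μ(y − x) : y ∈ P, μ ≥ 0}` for `x ∈ relint F`. -/
def supportCone (P F : Set (EuclideanSpace ℝ (Fin 3))) :
    Set (EuclideanSpace ℝ (Fin 3)) :=
  {v | ∃ x ∈ intrinsicInterior ℝ F, ∃ y ∈ P, ∃ μ : ℝ, 0 ≤ μ ∧ v = μ • (y - x)}

/-- `F` is a proper face of the polytope `P`: an exposed face in some unit direction. -/
def IsProperFace (P F : Set (EuclideanSpace ℝ (Fin 3))) : Prop :=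
  ∃ w : EuclideanSpace ℝ (Fin 3), ‖w‖ = 1 ∧ F = exposedFace P w

/-- The face `F` of `P` and the face `G` of `Q` are isothetic:
`G` is a translate of `F` and `cone(P,F) = cone(Q,G)`. -/
def Isothetic (P F Q G : Set (EuclideanSpace ℝ (Fin 3))) : Prop :=
  (∃ t : EuclideanSpace ℝ (Fin 3), G = (t + ·) '' F) ∧ supportCone P F = supportCone Q G

/-- The pairs `(P₁, P₂)` and `(Q₁, Q₂)` are synisothetic: every proper face of `P₁` or of
`P₂` is isothetic to some proper face of `Q₁` or of `Q₂`, and conversely. -/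
def Synisothetic (P₁ P₂ Q₁ Q₂ : Set (EuclideanSpace ℝ (Fin 3))) : Prop :=
  (∀ F, IsProperFace P₁ F →
    ∃ G, (IsProperFace Q₁ G ∧ Isothetic P₁ F Q₁ G) ∨ (IsProperFace Q₂ G ∧ Isothetic P₁ F Q₂ G)) ∧
  (∀ F, IsProperFace P₂ F →
    ∃ G, (IsProperFace Q₁ G ∧ Isothetic P₂ F Q₁ G) ∨ (IsProperFace Q₂ G ∧ Isothetic P₂ F Q₂ G)) ∧
  (∀ G, IsProperFace Q₁ G →
    ∃ F, (IsProperFace P₁ F ∧ Isothetic Q₁ G P₁ F) ∨ (IsProperFace P₂ F ∧ Isothetic Q₁ G P₂ F)) ∧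
  (∀ G, IsProperFace Q₂ G →
    ∃ F, (IsProperFace P₁ F ∧ Isothetic Q₂ G P₁ F) ∨ (IsProperFace P₂ F ∧ Isothetic Q₂ G P₂ F))

/-- A (compact) convex polytope: the convex hull of a finite set. -/
def IsPolytope (P : Set (EuclideanSpace ℝ (Fin 3))) : Prop :=
  ∃ S : Finset (EuclideanSpace ℝ (Fin 3)),
    P = convexHull ℝ (S : Set (EuclideanSpace ℝ (Fin 3)))

/-!
Fix a direction. The support cone of a face determines which face it is: `Q_v` consists of the
points of `Q` that differ from a relative interior point of `Q_v` by a vector of the lineality space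
of `cone(Q, Q_v)`, and if this cone equals `cone(P, P_w)`, then its lineality space is its
intersection with `w^⊥`, so that `Q_v = Q_w`. Hence synisothety forces `P_w` and `(-P)_w` to be
matched, in some order, with `P'_w` and `(-P')_w`, and in either order the face of the difference
body `P - P` in direction `w` is a translate of the face of `P' - P'`. For polytopes the translation
vector is locally constant in `w`, so it is constant since the sphere of directions is connected; as
both difference bodies are centrally symmetric, it vanishes. This forces the translations matching
`P_w` and `(-P)_w` to be opposite, and reflecting the second one gives the claim for `P_{-w}`.

Directions are taken to be norm-one functionals on a finite-dimensional normed space, which the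
Riesz isometry identifies with unit vectors in the Euclidean case.
-/

open Topology

section Module

variable {E : Type*} [AddCommGroup E]

lemma neg_vadd_set (t : E) (A : Set E) : -(t +ᵥ A) = -t +ᵥ -A := by
  simp_rw [← Set.singleton_vadd, vadd_eq_add, neg_add, Set.neg_singleton]

lemma sign_smul_sub_self {R : Type*} [Ring R] [Module R E] {σ : R} (hσ : σ = 1 ∨ σ = -1)
    (A : Set E) : σ • A - σ • A = A - A := by
  rcases hσ with rfl | rfl
  · rw [one_smul]
  · rw [Set.neg_smul_set, one_smul, sub_neg_eq_add, neg_add_eq_sub]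

variable [Module ℝ E]

/-- A convex polytope, possibly empty or of lower dimension; over Euclidean space it is
`IsPolytope`. -/
def IsConvexPolytope (P : Set E) : Prop :=
  ∃ S : Finset E, P = convexHull ℝ (S : Set E)

namespace IsConvexPolytope

variable {P Q : Set E}

lemma convex (hP : IsConvexPolytope P) : Convex ℝ P := by
  obtain ⟨S, rfl⟩ := hP
  exact convex_convexHull ℝ _

lemma neg (hP : IsConvexPolytope P) : IsConvexPolytope (-P) := by
  classical
  obtain ⟨S, rfl⟩ := hP
  exact ⟨-S, by rw [Finset.coe_neg, convexHull_neg]⟩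

lemma smul (hP : IsConvexPolytope P) (r : ℝ) : IsConvexPolytope (r • P) := by
  classical
  obtain ⟨S, rfl⟩ := hP
  exact ⟨r • S, by rw [Finset.coe_smul_finset, convexHull_smul]⟩

lemma sub (hP : IsConvexPolytope P) (hQ : IsConvexPolytope Q) : IsConvexPolytope (P - Q) := by
  classical
  obtain ⟨S, rfl⟩ := hP
  obtain ⟨T, rfl⟩ := hQ
  exact ⟨S - T, by rw [Finset.coe_sub, convexHull_sub]⟩

end IsConvexPolytope

end Module

section TopologicalVectorSpace

variable {E : Type*} [AddCommGroup E] [Module ℝ E] [TopologicalSpace E]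

lemma toExposed_neg (l : StrongDual ℝ E) (A : Set E) : l.toExposed (-A) = -(-l).toExposed A := by
  ext x
  refine and_congr Iff.rfl ⟨fun h y hy => ?_, fun h y hy => ?_⟩
  · simpa using h (-y) (by simpa using hy)
  · simpa using h (-y) hy

lemma toExposed_add (l : StrongDual ℝ E) (A B : Set E) :
    l.toExposed (A + B) = l.toExposed A + l.toExposed B := by
  ext x
  constructor
  · rintro ⟨⟨a, ha, b, hb, rfl⟩, hmax⟩
    refine Set.add_mem_add ⟨ha, fun y hy => ?_⟩ ⟨hb, fun y hy => ?_⟩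
    · simpa using hmax _ (Set.add_mem_add hy hb)
    · simpa using hmax _ (Set.add_mem_add ha hy)
  · rintro ⟨a, ha, b, hb, rfl⟩
    refine ⟨Set.add_mem_add ha.1 hb.1, ?_⟩
    rintro _ ⟨c, hc, d, hd, rfl⟩
    simpa only [map_add] using add_le_add (ha.2 c hc) (hb.2 d hd)

lemma toExposed_vadd (l : StrongDual ℝ E) (t : E) (A : Set E) :
    l.toExposed (t +ᵥ A) = t +ᵥ l.toExposed A := by
  have hsingleton : l.toExposed {t} = {t} := by
    ext x
    simp +contextual [ContinuousLinearMap.toExposed]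
  have hadd := toExposed_add l {t} A
  rwa [hsingleton, Set.singleton_add, Set.singleton_add] at hadd

lemma toExposed_sub_eq_add_vadd {A B : Set E} {l : StrongDual ℝ E} {s t : E}
    (hs : l.toExposed A = s +ᵥ l.toExposed B) (ht : l.toExposed (-A) = t +ᵥ l.toExposed (-B)) :
    l.toExposed (A - A) = (s + t) +ᵥ l.toExposed (B - B) := by
  simp_rw [sub_eq_add_neg, toExposed_add, hs, ht, vadd_add_vadd_comm]

lemma toExposed_toExposed_of_subset {l l' : StrongDual ℝ E} {A : Set E}
    (hsub : l'.toExposed A ⊆ l.toExposed A) (hne : (l'.toExposed A).Nonempty) :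
    l'.toExposed (l.toExposed A) = l'.toExposed A := by
  obtain ⟨z, hz⟩ := hne
  ext x
  exact ⟨fun hx => ⟨hx.1.1, fun y hy => (hz.2 y hy).trans (hx.2 z (hsub hz))⟩,
    fun hx => ⟨hsub hx, fun y hy => hx.2 y hy.1⟩⟩

lemma toExposed_nonempty_of_isCompact {A : Set E} (hA : IsCompact A) (hne : A.Nonempty)
    (l : StrongDual ℝ E) : (l.toExposed A).Nonempty :=
  let ⟨x, hx, hmax⟩ := hA.exists_isMaxOn hne l.continuous.continuousOn
  ⟨x, hx, fun _ hy => hmax hy⟩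

lemma mem_toExposed_iff_map_sub_eq_zero {l : StrongDual ℝ E} {A : Set E} {x y : E}
    (hx : x ∈ l.toExposed A) : y ∈ l.toExposed A ↔ y ∈ A ∧ l (y - x) = 0 := by
  rw [map_sub, sub_eq_zero]
  exact ⟨fun hy => ⟨hy.1, (hx.2 y hy.1).antisymm (hy.2 x hx.1)⟩,
    fun ⟨hyA, hyx⟩ => ⟨hyA, fun z hz => hyx ▸ hx.2 z hz⟩⟩

lemma eventually_mem_toExposed_imp [ContinuousSMul ℝ E] (l : StrongDual ℝ E) (A : Set E) (x : E) :
    ∀ᶠ l' in 𝓝 l, x ∈ l'.toExposed A → x ∈ l.toExposed A := by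
  by_cases hmax : ∀ y ∈ A, l y ≤ l x
  · exact .of_forall fun _ hx => ⟨hx.1, hmax⟩
  · push Not at hmax
    obtain ⟨y, hy, hlt⟩ := hmax
    have hopen : IsOpen {l' : StrongDual ℝ E | l' x < l' y} :=
      isOpen_lt (continuous_eval_const x) (continuous_eval_const y)
    filter_upwards [hopen.mem_nhds hlt] with l' hlt' hx
    exact absurd (hx.2 y hy) hlt'.not_ge

/-- The support cone of `A` at `F`, generated by the vectors from the relative interior of `F` to
`A`; over Euclidean space it is `supportCone`. No single base point is chosen, so that the cone is
empty when `F` is. -/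
def faceCone (A F : Set E) : Set E :=
  {v | ∃ x ∈ intrinsicInterior ℝ F, ∃ y ∈ A, ∃ μ : ℝ, 0 ≤ μ ∧ v = μ • (y - x)}

lemma sub_mem_faceCone {A F : Set E} {x y : E} (hx : x ∈ intrinsicInterior ℝ F) (hy : y ∈ A) :
    y - x ∈ faceCone A F :=
  ⟨x, hx, y, hy, 1, zero_le_one, (one_smul ℝ _).symm⟩

lemma map_nonpos_of_mem_faceCone {l : StrongDual ℝ E} {A : Set E} {v : E}
    (hv : v ∈ faceCone A (l.toExposed A)) : l v ≤ 0 := by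
  obtain ⟨x, hx, y, hy, μ, hμ, rfl⟩ := hv
  rw [map_smul, map_sub]
  exact mul_nonpos_of_nonneg_of_nonpos hμ (sub_nonpos.2 ((intrinsicInterior_subset hx).2 y hy))

lemma IsConvexPolytope.convex_toExposed {P : Set E} (hP : IsConvexPolytope P) (l : StrongDual ℝ E) :
    Convex ℝ (l.toExposed P) :=
  ContinuousLinearMap.toExposed.isExposed.convex hP.convex

/-- Faces that are translates of each other and have the same support cone; over Euclidean space
this is `Isothetic`. -/
def IsotheticFaces (A F B G : Set E) : Prop :=
  (∃ t : E, G = t +ᵥ F) ∧ faceCone A F = faceCone B G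

/-- The faces of `A` and of `B` in the common direction `l` are isothetic. -/
def IsotheticAlong (l : StrongDual ℝ E) (A B : Set E) : Prop :=
  IsotheticFaces A (l.toExposed A) B (l.toExposed B)

namespace IsotheticAlong

variable {l : StrongDual ℝ E} {A B C : Set E}

lemma symm (h : IsotheticAlong l A B) : IsotheticAlong l B A := by
  obtain ⟨⟨t, ht⟩, hcone⟩ := h
  exact ⟨⟨-t, eq_neg_vadd_iff.2 ht.symm⟩, hcone.symm⟩

lemma trans (hAB : IsotheticAlong l A B) (hBC : IsotheticAlong l B C) : IsotheticAlong l A C := by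
  obtain ⟨⟨s, hs⟩, hconeAB⟩ := hAB
  obtain ⟨⟨t, ht⟩, hconeBC⟩ := hBC
  exact ⟨⟨t + s, by rw [ht, hs, vadd_vadd]⟩, hconeAB.trans hconeBC⟩

lemma exists_toExposed_sub_eq_vadd (hAB : IsotheticAlong l A B)
    (hneg : IsotheticAlong l (-A) (-B)) :
    ∃ t : E, l.toExposed (A - A) = t +ᵥ l.toExposed (B - B) := by
  obtain ⟨⟨s, hs⟩, -⟩ := hAB.symm
  obtain ⟨⟨t, ht⟩, -⟩ := hneg.symm
  exact ⟨s + t, toExposed_sub_eq_add_vadd hs ht⟩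

end IsotheticAlong

variable [IsTopologicalAddGroup E]

lemma intrinsicInterior_neg (F : Set E) : intrinsicInterior ℝ (-F) = -intrinsicInterior ℝ F := by
  simp_rw [← Set.image_neg_eq_neg]
  exact (ContinuousLinearEquiv.neg ℝ (M := E)).toContinuousAffineEquiv.intrinsicInterior_image F

lemma faceCone_neg (A F : Set E) : faceCone (-A) (-F) = -faceCone A F := by
  have neg_mem {A F : Set E} {v : E} (hv : v ∈ faceCone A F) : -v ∈ faceCone (-A) (-F) := by
    obtain ⟨x, hx, y, hy, μ, hμ, rfl⟩ := hv
    refine ⟨-x, ?_, -y, Set.neg_mem_neg.2 hy, μ, hμ, by module⟩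
    rwa [intrinsicInterior_neg, Set.neg_mem_neg]
  refine Set.Subset.antisymm (fun v hv => ?_) (fun v hv => neg_neg v ▸ neg_mem hv)
  simpa only [neg_neg, Set.mem_neg] using neg_mem hv

variable [ContinuousSMul ℝ E]

lemma eventually_lineMap_mem_of_mem_intrinsicInterior {F : Set E} {x y : E}
    (hx : x ∈ intrinsicInterior ℝ F) (hy : y ∈ affineSpan ℝ F) :
    ∀ᶠ r in 𝓝 (0 : ℝ), AffineMap.lineMap x y r ∈ F := by
  obtain ⟨x, hx, rfl⟩ := hx
  let line (r : ℝ) : affineSpan ℝ F :=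
    ⟨AffineMap.lineMap (x : E) y r, AffineMap.lineMap_mem r x.2 hy⟩
  have hline : Filter.Tendsto line (𝓝 0) (𝓝 x) :=
    (AffineMap.lineMap_continuous.subtype_mk _).tendsto' _ _ (by simp)
  filter_upwards [hline.eventually (mem_interior_iff_mem_nhds.1 hx)] with r hr using hr

lemma neg_mem_faceCone_iff {l : StrongDual ℝ E} {A : Set E} {v : E}
    (hv : v ∈ faceCone A (l.toExposed A)) : -v ∈ faceCone A (l.toExposed A) ↔ l v = 0 := by
  refine ⟨fun hneg => ?_, fun hlv => ?_⟩
  · have hle := map_nonpos_of_mem_faceCone hneg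
    rw [map_neg, neg_nonpos] at hle
    exact (map_nonpos_of_mem_faceCone hv).antisymm hle
  · obtain ⟨x, hx, y, hy, μ, hμ, rfl⟩ := hv
    rcases hμ.eq_or_lt with rfl | hμ
    · exact ⟨x, hx, y, hy, 0, le_rfl, by simp⟩
    have hlyx : l (y - x) = 0 := by
      rw [map_smul] at hlv
      exact (smul_eq_zero.1 hlv).resolve_left hμ.ne'
    have hyF : y ∈ l.toExposed A :=
      (mem_toExposed_iff_map_sub_eq_zero (intrinsicInterior_subset hx)).2 ⟨hy, hlyx⟩
    -- The segment from `y` to `x` can be prolonged beyond `x` within the face.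
    have hprolong : ∀ᶠ r in 𝓝[<] (0 : ℝ), AffineMap.lineMap x y r ∈ l.toExposed A :=
      (eventually_lineMap_mem_of_mem_intrinsicInterior hx
        (subset_affineSpan ℝ _ hyF)).filter_mono nhdsWithin_le_nhds
    obtain ⟨r, hr, hr0 : r < 0⟩ := (hprolong.and self_mem_nhdsWithin).exists
    refine ⟨x, hx, _, hr.1, μ / -r, by have := neg_pos.2 hr0; positivity, ?_⟩
    rw [AffineMap.lineMap_apply_module', add_sub_cancel_right, smul_smul, div_neg, neg_mul,
      div_mul_cancel₀ _ hr0.ne, neg_smul]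

lemma toExposed_eq_of_faceCone_eq {l m : StrongDual ℝ E} {A B : Set E}
    (hcone : faceCone A (l.toExposed A) = faceCone B (m.toExposed B))
    (hne : (intrinsicInterior ℝ (m.toExposed B)).Nonempty) : m.toExposed B = l.toExposed B := by
  obtain ⟨x, hx⟩ := hne
  have hxm : x ∈ m.toExposed B := intrinsicInterior_subset hx
  have hxl : x ∈ l.toExposed B := ⟨hxm.1, fun y hy => by
    have hle := map_nonpos_of_mem_faceCone (hcone ▸ sub_mem_faceCone hx hy)
    rwa [map_sub, sub_nonpos] at hle⟩
  ext y
  rw [mem_toExposed_iff_map_sub_eq_zero hxm, mem_toExposed_iff_map_sub_eq_zero hxl]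
  refine and_congr_right fun hy => ?_
  have hmem := sub_mem_faceCone hx hy
  rw [← neg_mem_faceCone_iff hmem, ← hcone, neg_mem_faceCone_iff (hcone ▸ hmem)]

namespace IsConvexPolytope

variable {P : Set E}

lemma isCompact (hP : IsConvexPolytope P) : IsCompact P := by
  obtain ⟨S, rfl⟩ := hP
  exact S.finite_toSet.isCompact_convexHull ℝ

lemma isCompact_toExposed [T2Space E] (hP : IsConvexPolytope P) (l : StrongDual ℝ E) :
    IsCompact (l.toExposed P) :=
  ContinuousLinearMap.toExposed.isExposed.isCompact hP.isCompact

end IsConvexPolytope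

end TopologicalVectorSpace

section LocallyConvexSpace

variable {E : Type*} [AddCommGroup E] [Module ℝ E] [TopologicalSpace E] [IsTopologicalAddGroup E]
  [ContinuousSMul ℝ E] [LocallyConvexSpace ℝ E] [T2Space E]

lemma vadd_left_injective_of_isCompact {A : Set E} (hA : IsCompact A) (hne : A.Nonempty) :
    Function.Injective fun t : E => t +ᵥ A := by
  have map_le {s t : E} (hst : s +ᵥ A = t +ᵥ A) (l : StrongDual ℝ E) : l s ≤ l t := by
    obtain ⟨x, hx, hmax⟩ := toExposed_nonempty_of_isCompact hA hne l
    obtain ⟨y, hy, hyx⟩ := hst.subset (Set.vadd_mem_vadd_set hx)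
    have hsum : l t + l y = l s + l x := by simpa only [vadd_eq_add, map_add] using congrArg l hyx
    linarith [hmax y hy]
  intro s t hst
  by_contra hst_ne
  obtain ⟨l, hl⟩ := SeparatingDual.exists_separating_of_ne (R := ℝ) hst_ne
  exact hl ((map_le hst l).antisymm (map_le hst.symm l))

lemma subset_convexHull_inter_of_isExposed {S F : Set E} (hS : S.Finite)
    (hF : IsExposed ℝ (convexHull ℝ S) F) : F ⊆ convexHull ℝ (S ∩ F) := by
  have hFcompact : IsCompact F := hF.isCompact (hS.isCompact_convexHull ℝ)
  have hFconvex : Convex ℝ F := hF.convex (convex_convexHull ℝ S)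
  have hext : F.extremePoints ℝ ⊆ S ∩ F := fun x hx =>
    ⟨extremePoints_convexHull_subset (hF.isExtreme.extremePoints_subset_extremePoints hx), hx.1⟩
  calc F
    _ = closure (convexHull ℝ (F.extremePoints ℝ)) :=
      (closure_convexHull_extremePoints hFcompact hFconvex).symm
    _ ⊆ convexHull ℝ (S ∩ F) :=
      closure_minimal (convexHull_mono hext) ((hS.inter_of_left F).isCompact_convexHull ℝ).isClosed

namespace IsConvexPolytope

variable {P : Set E}

lemma eventually_toExposed_subset (hP : IsConvexPolytope P) (l : StrongDual ℝ E) :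
    ∀ᶠ l' in 𝓝 l, l'.toExposed P ⊆ l.toExposed P := by
  have hconvex := hP.convex_toExposed l
  obtain ⟨S, rfl⟩ := hP
  filter_upwards [(Filter.eventually_all_finset S).2 fun x _ =>
    eventually_mem_toExposed_imp l (convexHull ℝ (S : Set E)) x] with l' hl'
  calc l'.toExposed (convexHull ℝ (S : Set E))
    _ ⊆ convexHull ℝ (S ∩ l'.toExposed (convexHull ℝ (S : Set E))) :=
      subset_convexHull_inter_of_isExposed S.finite_toSet
        ContinuousLinearMap.toExposed.isExposed
    _ ⊆ l.toExposed (convexHull ℝ (S : Set E)) :=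
      convexHull_min (fun x hx => hl' x hx.1 hx.2) hconvex

lemma eventually_toExposed_toExposed (hP : IsConvexPolytope P) (l : StrongDual ℝ E) :
    ∀ᶠ l' in 𝓝 l, l'.toExposed (l.toExposed P) = l'.toExposed P := by
  rcases P.eq_empty_or_nonempty with rfl | hne
  · simp [ContinuousLinearMap.toExposed]
  filter_upwards [hP.eventually_toExposed_subset l] with l' hsub
  exact toExposed_toExposed_of_subset hsub (toExposed_nonempty_of_isCompact hP.isCompact hne l')

end IsConvexPolytope

lemma IsotheticAlong.exists_vadd_and_neg {A B : Set E} {l : StrongDual ℝ E}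
    (hB : IsConvexPolytope B) (hBne : B.Nonempty) (hAB : IsotheticAlong l A B)
    (hneg : IsotheticAlong l (-A) (-B)) (hsub : l.toExposed (A - A) = l.toExposed (B - B)) :
    ∃ x : E, l.toExposed A = x +ᵥ l.toExposed B ∧
      faceCone A (l.toExposed A) = faceCone B (l.toExposed B) ∧
      (-l).toExposed A = x +ᵥ (-l).toExposed B ∧
      faceCone A ((-l).toExposed A) = faceCone B ((-l).toExposed B) := by
  obtain ⟨⟨s, hs⟩, hcone⟩ := hAB.symm
  obtain ⟨⟨t, ht⟩, hconeneg⟩ := hneg.symm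
  have hst : s + t = 0 := vadd_left_injective_of_isCompact ((hB.sub hB).isCompact_toExposed l)
    (toExposed_nonempty_of_isCompact (hB.sub hB).isCompact (hBne.sub hBne) l) <| by
      simp only [← toExposed_sub_eq_add_vadd hs ht, hsub, zero_vadd]
  refine ⟨s, hs, hcone.symm, neg_injective ?_, neg_injective ?_⟩
  · rwa [neg_vadd_set, ← toExposed_neg, ← toExposed_neg, neg_eq_of_add_eq_zero_right hst]
  · rw [← faceCone_neg, ← faceCone_neg, ← toExposed_neg, ← toExposed_neg, hconeneg]

end LocallyConvexSpace

section NormedSpace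

variable {E : Type*} [NormedAddCommGroup E] [NormedSpace ℝ E]

lemma isPreconnected_sphere_strongDual (hE : 1 < Module.finrank ℝ E) (r : ℝ) :
    IsPreconnected (Metric.sphere (0 : StrongDual ℝ E) r) := by
  have := FiniteDimensional.of_finrank_pos (zero_lt_one.trans hE)
  refine isPreconnected_sphere ?_ 0 r
  rw [← Module.finrank_eq_rank, ← LinearMap.toContinuousLinearMap.finrank_eq,
    Subspace.dual_finrank_eq]
  exact_mod_cast hE

/-- The translation vector is locally constant, because the faces in directions close to `l` are
faces of the face in direction `l`. -/
lemma IsConvexPolytope.exists_forall_toExposed_eq_vadd (hE : 1 < Module.finrank ℝ E) {P Q : Set E}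
    (hP : IsConvexPolytope P) (hQ : IsConvexPolytope Q) (hQne : Q.Nonempty)
    (h : ∀ l : StrongDual ℝ E, ‖l‖ = 1 → ∃ t : E, l.toExposed P = t +ᵥ l.toExposed Q) :
    ∃ t : E, ∀ l : StrongDual ℝ E, ‖l‖ = 1 → l.toExposed P = t +ᵥ l.toExposed Q := by
  choose t ht using fun l : Metric.sphere (0 : StrongDual ℝ E) 1 =>
    h l (mem_sphere_zero_iff_norm.1 l.2)
  have hconst : IsLocallyConstant t := by
    refine (IsLocallyConstant.iff_eventually_eq t).2 fun l => ?_
    have hval := continuous_subtype_val.tendsto l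
    filter_upwards [hval.eventually (hP.eventually_toExposed_toExposed l),
      hval.eventually (hQ.eventually_toExposed_toExposed l)] with m hPm hQm
    refine vadd_left_injective_of_isCompact (hQ.isCompact_toExposed m)
      (toExposed_nonempty_of_isCompact hQ.isCompact hQne m) ?_
    calc t m +ᵥ m.1.toExposed Q
      _ = m.1.toExposed (l.1.toExposed P) := by rw [← ht m, hPm]
      _ = t l +ᵥ m.1.toExposed Q := by rw [ht l, toExposed_vadd, hQm]
  have := isPreconnected_iff_preconnectedSpace.1 (isPreconnected_sphere_strongDual (E := E) hE 1)
  obtain ⟨t₀, rfl⟩ := hconst.exists_eq_const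
  exact ⟨t₀, fun l hl => ht ⟨l, mem_sphere_zero_iff_norm.2 hl⟩⟩

lemma IsConvexPolytope.toExposed_eq_of_neg_eq (hE : 1 < Module.finrank ℝ E) {P Q : Set E}
    (hP : IsConvexPolytope P) (hQ : IsConvexPolytope Q) (hQne : Q.Nonempty)
    (hPneg : -P = P) (hQneg : -Q = Q)
    (h : ∀ l : StrongDual ℝ E, ‖l‖ = 1 → ∃ t : E, l.toExposed P = t +ᵥ l.toExposed Q)
    {l : StrongDual ℝ E} (hl : ‖l‖ = 1) : l.toExposed P = l.toExposed Q := by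
  obtain ⟨t, ht⟩ := hP.exists_forall_toExposed_eq_vadd hE hQ hQne h
  have htneg : l.toExposed P = -t +ᵥ l.toExposed Q := by
    have hPl := toExposed_neg l P
    rwa [hPneg, ht (-l) ((norm_neg l).trans hl), neg_vadd_set, ← toExposed_neg, hQneg] at hPl
  have := IsAddTorsionFree.of_isTorsionFree ℝ E
  have ht0 : t = 0 := self_eq_neg.1 <| vadd_left_injective_of_isCompact (hQ.isCompact_toExposed l)
    (toExposed_nonempty_of_isCompact hQ.isCompact hQne l) ((ht l hl).symm.trans htneg)
  rw [ht l hl, ht0, zero_vadd]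

/-- A proper face, exposed by a norm-one functional; over Euclidean space it is `IsProperFace`. -/
def IsProperExposedFace (A F : Set E) : Prop :=
  ∃ l : StrongDual ℝ E, ‖l‖ = 1 ∧ F = l.toExposed A

/-- Every proper face of `A` is isothetic to a proper face of `B` or of `C`: one of the four
conditions defining synisothetic pairs. -/
def FacesIsotheticTo (A B C : Set E) : Prop :=
  ∀ F, IsProperExposedFace A F → ∃ G, (IsProperExposedFace B G ∧ IsotheticFaces A F B G) ∨
    (IsProperExposedFace C G ∧ IsotheticFaces A F C G)

/-- Synisothetic pairs of sets; over Euclidean space this is `Synisothetic`. -/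
def SynisotheticPairs (P₁ P₂ Q₁ Q₂ : Set E) : Prop :=
  FacesIsotheticTo P₁ Q₁ Q₂ ∧ FacesIsotheticTo P₂ Q₁ Q₂ ∧
    FacesIsotheticTo Q₁ P₁ P₂ ∧ FacesIsotheticTo Q₂ P₁ P₂

lemma IsotheticFaces.isotheticAlong [FiniteDimensional ℝ E] {A B G : Set E} {l : StrongDual ℝ E}
    (hB : IsConvexPolytope B) (hG : IsProperExposedFace B G)
    (h : IsotheticFaces A (l.toExposed A) B G) : IsotheticAlong l A B := by
  obtain ⟨m, -, rfl⟩ := hG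
  have hml : m.toExposed B = l.toExposed B := by
    rcases B.eq_empty_or_nonempty with rfl | hne
    · simp [ContinuousLinearMap.toExposed]
    · exact toExposed_eq_of_faceCone_eq h.2
        ((toExposed_nonempty_of_isCompact hB.isCompact hne m).intrinsicInterior
          (hB.convex_toExposed m))
  rwa [IsotheticAlong, ← hml]

lemma FacesIsotheticTo.isotheticAlong [FiniteDimensional ℝ E] {A B C : Set E}
    (h : FacesIsotheticTo A B C) (hB : IsConvexPolytope B) (hC : IsConvexPolytope C)
    {l : StrongDual ℝ E} (hl : ‖l‖ = 1) : IsotheticAlong l A B ∨ IsotheticAlong l A C := by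
  obtain ⟨G, hG | hG⟩ := h _ ⟨l, hl, rfl⟩
  · exact .inl (hG.2.isotheticAlong hB hG.1)
  · exact .inr (hG.2.isotheticAlong hC hG.1)

lemma SynisotheticPairs.exists_perfect_matching [FiniteDimensional ℝ E] {P₁ P₂ Q₁ Q₂ : Set E}
    (h : SynisotheticPairs P₁ P₂ Q₁ Q₂) (hP₁ : IsConvexPolytope P₁) (hP₂ : IsConvexPolytope P₂)
    (hQ₁ : IsConvexPolytope Q₁) (hQ₂ : IsConvexPolytope Q₂) {l : StrongDual ℝ E} (hl : ‖l‖ = 1) :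
    (IsotheticAlong l P₁ Q₁ ∧ IsotheticAlong l P₂ Q₂) ∨
      (IsotheticAlong l P₁ Q₂ ∧ IsotheticAlong l P₂ Q₁) := by
  obtain ⟨hP₁Q, hP₂Q, hQ₁P, hQ₂P⟩ := h
  rcases hP₁Q.isotheticAlong hQ₁ hQ₂ hl with h₁₁ | h₁₂ <;>
    rcases hP₂Q.isotheticAlong hQ₁ hQ₂ hl with h₂₁ | h₂₂
  · rcases hQ₂P.isotheticAlong hP₁ hP₂ hl with g₂₁ | g₂₂
    · exact .inl ⟨h₁₁, h₂₁.trans (h₁₁.symm.trans g₂₁.symm)⟩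
    · exact .inl ⟨h₁₁, g₂₂.symm⟩
  · exact .inl ⟨h₁₁, h₂₂⟩
  · exact .inr ⟨h₁₂, h₂₁⟩
  · rcases hQ₁P.isotheticAlong hP₁ hP₂ hl with g₁₁ | g₁₂
    · exact .inr ⟨h₁₂, h₂₂.trans (h₁₂.symm.trans g₁₁.symm)⟩
    · exact .inr ⟨h₁₂, g₁₂.symm⟩

lemma SynisotheticPairs.exists_isotheticAlong_smul [FiniteDimensional ℝ E] {P P' : Set E}
    (h : SynisotheticPairs P (-P) P' (-P')) (hP : IsConvexPolytope P) (hP' : IsConvexPolytope P')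
    {l : StrongDual ℝ E} (hl : ‖l‖ = 1) :
    ∃ σ : ℝ, (σ = 1 ∨ σ = -1) ∧
      IsotheticAlong l P (σ • P') ∧ IsotheticAlong l (-P) (-(σ • P')) := by
  rcases h.exists_perfect_matching hP hP.neg hP' hP'.neg hl with ⟨h₁, h₂⟩ | ⟨h₁, h₂⟩
  · exact ⟨1, .inl rfl, by rwa [one_smul], by rwa [one_smul]⟩
  · have hsmul : (-1 : ℝ) • P' = -P' := by rw [Set.neg_smul_set, one_smul]
    exact ⟨-1, .inr rfl, by rwa [hsmul], by rwa [hsmul, neg_neg]⟩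

lemma SynisotheticPairs.toExposed_sub_eq (hE : 1 < Module.finrank ℝ E) {P P' : Set E}
    (h : SynisotheticPairs P (-P) P' (-P')) (hP : IsConvexPolytope P) (hP' : IsConvexPolytope P')
    (hP'ne : P'.Nonempty) {l : StrongDual ℝ E} (hl : ‖l‖ = 1) :
    l.toExposed (P - P) = l.toExposed (P' - P') := by
  have := FiniteDimensional.of_finrank_pos (zero_lt_one.trans hE)
  refine (hP.sub hP).toExposed_eq_of_neg_eq hE (hP'.sub hP') (hP'ne.sub hP'ne)
    (neg_sub P P) (neg_sub P' P') (fun m hm => ?_) hl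
  obtain ⟨σ, hσ, hpos, hneg⟩ := h.exists_isotheticAlong_smul hP hP' hm
  obtain ⟨t, ht⟩ := hpos.exists_toExposed_sub_eq_vadd hneg
  exact ⟨t, by rw [ht, sign_smul_sub_self hσ]⟩

end NormedSpace

theorem synisothetic_faces_match_in_antipodal_directions_general
    {E : Type*} [NormedAddCommGroup E] [NormedSpace ℝ E] (hE : 1 < Module.finrank ℝ E)
    {P P' : Set E} (hP : IsConvexPolytope P) (hP' : IsConvexPolytope P') (hP'ne : P'.Nonempty)
    (hsyn : SynisotheticPairs P (-P) P' (-P')) {l : StrongDual ℝ E} (hl : ‖l‖ = 1) :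
    ∃ σ : ℝ, (σ = 1 ∨ σ = -1) ∧ ∃ x : E,
      l.toExposed P = x +ᵥ l.toExposed (σ • P') ∧
      faceCone P (l.toExposed P) = faceCone (σ • P') (l.toExposed (σ • P')) ∧
      (-l).toExposed P = x +ᵥ (-l).toExposed (σ • P') ∧
      faceCone P ((-l).toExposed P) = faceCone (σ • P') ((-l).toExposed (σ • P')) := by
  have := FiniteDimensional.of_finrank_pos (zero_lt_one.trans hE)
  obtain ⟨σ, hσ, hpos, hneg⟩ := hsyn.exists_isotheticAlong_smul hP hP' hl
  have hsub := hsyn.toExposed_sub_eq hE hP hP' hP'ne hl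
  rw [← sign_smul_sub_self hσ P'] at hsub
  exact ⟨σ, hσ, hpos.exists_vadd_and_neg (hP'.smul σ) hP'ne.smul_set hneg hsub⟩


section EuclideanSpace

lemma exposedFace_eq_toExposed (P : Set (EuclideanSpace ℝ (Fin 3)))
    (w : EuclideanSpace ℝ (Fin 3)) :
    exposedFace P w = (InnerProductSpace.toDual ℝ _ w).toExposed P :=
  rfl

lemma isProperFace_iff_isProperExposedFace {P F : Set (EuclideanSpace ℝ (Fin 3))} :
    IsProperFace P F ↔ IsProperExposedFace P F :=
  (InnerProductSpace.toDual ℝ (EuclideanSpace ℝ (Fin 3))).surjective.exists.trans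
    (by simp only [LinearIsometryEquiv.norm_map]; rfl) |>.symm

lemma synisothetic_iff_synisotheticPairs {P₁ P₂ Q₁ Q₂ : Set (EuclideanSpace ℝ (Fin 3))} :
    Synisothetic P₁ P₂ Q₁ Q₂ ↔ SynisotheticPairs P₁ P₂ Q₁ Q₂ := by
  simp only [Synisothetic, isProperFace_iff_isProperExposedFace]
  rfl

end EuclideanSpace

/-- If `(P, −P)` and `(P', −P')` are synisothetic, then for each unit `w` there are
`σ ∈ {−1, 1}` and `x ∈ ℝ³` such that `P_w = (σP')_w + x`,
`cone(P, P_w) = cone(σP', (σP')_w)`, and the same holds with `w` replaced by `−w`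
(with the same `σ` and `x`). -/
theorem synisothetic_faces_match_in_antipodal_directions
    (P P' : Set (EuclideanSpace ℝ (Fin 3)))
    (hP : IsPolytope P) (hP' : IsPolytope P')
    (hPint : (interior P).Nonempty) (hP'int : (interior P').Nonempty)
    (hsyn : Synisothetic P (-P) P' (-P')) :
    ∀ w : EuclideanSpace ℝ (Fin 3), ‖w‖ = 1 →
      ∃ σ : ℝ, (σ = 1 ∨ σ = -1) ∧
        ∃ x : EuclideanSpace ℝ (Fin 3),
          exposedFace P w = (x + ·) '' exposedFace (σ • P') w ∧
          supportCone P (exposedFace P w) = supportCone (σ • P') (exposedFace (σ • P') w) ∧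
          exposedFace P (-w) = (x + ·) '' exposedFace (σ • P') (-w) ∧
          supportCone P (exposedFace P (-w)) =
            supportCone (σ • P') (exposedFace (σ • P') (-w)) := by
  intro w hw
  simp only [exposedFace_eq_toExposed, map_neg]
  exact synisothetic_faces_match_in_antipodal_directions_general (by simp) hP hP'
    (hP'int.mono interior_subset) (synisothetic_iff_synisotheticPairs.1 hsyn)
    ((LinearIsometryEquiv.norm_map _ w).trans hw)
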